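/- arXiv:2104.02161 — 2 statements merged into one kernel-verified Lean document; each statement's English description precedes it below -/
import Mathlib

section
/- (Rate of convergence in the feasible case r* = 0.) Let A, B ⊆ ℝⁿ be nonempty closed sets and (A*, B*, 0) a saturated gap between A and B with A*, B* nonempty and compact (so A* = B* ⊆ A ∩ B). Let θ ∈ [1/2, 1), ω = 4θ − 2, γ > 0, 0 < c < γ/2, and assume the gap satisfies the angle condition with exponent ω and constant γ and is (ω/2)-Hölder regular with constant c. Then there exists δ > 0 such that for every alternating sequence (a_k, b_k) between A and B reaching the δ-neighborhood of the gap, both (a_k) and (b_k) converge to a common point b* ∈ A ∩ B, with ‖b_k − b*‖ = O(k^{−(1−θ)/(2θ−1)}) and ‖a_k − b*‖ = O(k^{−(1−θ)/(2θ−1)}) when θ ∈ (1/2, 1), and with R-linear convergence when θ = 1/2. -/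
open Set Metric Filter Topology
open scoped RealInnerProductSpace

noncomputable section

/-- The (possibly multivalued) metric projection onto a set `S`. -/
def projSet {E : Type*} [NormedAddCommGroup E] (S : Set E) (x : E) : Set E :=
  {s | s ∈ S ∧ ‖x - s‖ = Metric.infDist x S}

/-- The proximal normal cone `N_A^p(a) = {λ u : λ ≥ 0, a ∈ P_A(a+u)}`. -/
def proxNormalCone {E : Type*} [NormedAddCommGroup E] [Module ℝ E] (A : Set E) (a : E) :
    Set E :=
  {v | ∃ lam : ℝ, 0 ≤ lam ∧ ∃ u : E, a ∈ projSet A (a + u) ∧ v = lam • u}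

/-- The cosine of the angle between two vectors. -/
def cosAngle {n : ℕ} (u v : EuclideanSpace ℝ (Fin n)) : ℝ := ⟪u, v⟫ / (‖u‖ * ‖v‖)

/-- A gap `(A*, B*, r*)` between `A` and `B`. -/
def IsGap {n : ℕ} (A B Astar Bstar : Set (EuclideanSpace ℝ (Fin n))) (rstar : ℝ) : Prop :=
  Astar ⊆ A ∧ Bstar ⊆ B ∧ 0 ≤ rstar ∧
  (∀ astar ∈ Astar, ∃ bstar ∈ Bstar, bstar ∈ projSet B astar ∧ ‖astar - bstar‖ = rstar) ∧
  (∀ bstar ∈ Bstar, ∃ astar ∈ Astar, astar ∈ projSet A bstar ∧ ‖astar - bstar‖ = rstar)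

/-- The angle condition with constant `γ` and exponent `ω` for the gap `(A*, B*, r*)`:
every prox-building block `b →p a⁺ → b⁺` with `a⁺` near `A*`, `b⁺` near `B*` and
`r = ‖a⁺ - b⁺‖ > r*` satisfies `(1 - cos α)/(r - r*)^ω ≥ γ`, `α = ∠(b - a⁺, b⁺ - a⁺)`. -/
def AngleCond {n : ℕ} (A B Astar Bstar : Set (EuclideanSpace ℝ (Fin n)))
    (rstar γ ω : ℝ) : Prop :=
  ∃ U V : Set (EuclideanSpace ℝ (Fin n)), IsOpen U ∧ Bstar ⊆ U ∧ IsOpen V ∧ Astar ⊆ V ∧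
    ∀ b ∈ B, ∀ aplus ∈ A, b - aplus ∈ proxNormalCone A aplus →
      ∀ bplus ∈ projSet B aplus, aplus ∈ V → bplus ∈ U → rstar < ‖aplus - bplus‖ →
      γ ≤ (1 - cosAngle (b - aplus) (bplus - aplus)) / (‖aplus - bplus‖ - rstar) ^ ω

/-- The gap `(A*, B*, r*)` is `σ`-Hölder regular with constant `c`. -/
def HolderRegularGap {n : ℕ} (A B Astar : Set (EuclideanSpace ℝ (Fin n)))
    (rstar c σ : ℝ) : Prop :=
  ∃ V : Set (EuclideanSpace ℝ (Fin n)), IsOpen V ∧ Astar ⊆ V ∧ ∃ η > (0:ℝ),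
    ∀ b ∈ B, ∀ aplus ∈ projSet A b, ∀ bplus ∈ projSet B aplus,
      aplus ∈ V → rstar < ‖aplus - bplus‖ → ‖aplus - bplus‖ < rstar + η →
      ¬ ∃ b' ∈ B, ‖b' - aplus‖ ≤ (1 + c) * ‖aplus - bplus‖ ∧ aplus ∈ projSet A b' ∧
        Real.sqrt c * (‖aplus - bplus‖ - rstar) ^ σ < cosAngle (b' - bplus) (aplus - bplus)

/-- The gap is saturated: for every neighborhood `V` of `A*` there is a neighborhood `U` of
`B*` with `P_A(b) ⊆ V` for all `b ∈ B ∩ U`. -/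
def SaturatedGap {n : ℕ} (A B Astar Bstar : Set (EuclideanSpace ℝ (Fin n))) : Prop :=
  ∀ V : Set (EuclideanSpace ℝ (Fin n)), IsOpen V → Astar ⊆ V →
    ∃ U : Set (EuclideanSpace ℝ (Fin n)), IsOpen U ∧ Bstar ⊆ U ∧
      ∀ b ∈ B ∩ U, projSet A b ⊆ V

/-- An alternating sequence of projections between `A` and `B`. -/
def IsAltSeq {n : ℕ} (A B : Set (EuclideanSpace ℝ (Fin n)))
    (a b : ℕ → EuclideanSpace ℝ (Fin n)) : Prop :=
  (∀ k, a k ∈ A) ∧ (∀ k, b k ∈ projSet B (a k)) ∧ (∀ k, a (k+1) ∈ projSet A (b k))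

/-- The alternating sequence reaches the `δ`-neighborhood of the gap `(A*, B*, r*)`. -/
def ReachesGap {n : ℕ} (Astar Bstar : Set (EuclideanSpace ℝ (Fin n))) (rstar δ : ℝ)
    (a b : ℕ → EuclideanSpace ℝ (Fin n)) : Prop :=
  ∃ k : ℕ, infDist (b k) Bstar ≤ δ ∧ infDist (a (k+1)) Astar ≤ δ ∧
    rstar < ‖a k - b k‖ ∧ ‖a k - b k‖ < rstar + δ

lemma s11_block {n : ℕ} (b a b' : EuclideanSpace ℝ (Fin n)) (γ c ω : ℝ)
    (hγ : 0 < γ) (hc : 0 < c)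
    (hr : 0 < ‖a - b'‖) (hrs : ‖a - b'‖ ≤ ‖b - a‖)
    (hang : γ ≤ (1 - cosAngle (b - a) (b' - a)) / (‖a - b'‖ - 0) ^ ω)
    (hreg : ‖b - a‖ ≤ (1 + c) * ‖a - b'‖ →
      cosAngle (b - b') (a - b') ≤ Real.sqrt c * (‖a - b'‖ - 0) ^ (ω/2)) :
    2 * γ * (‖a - b'‖ ^ 2 * ‖a - b'‖ ^ ω) ≤ ‖b - b'‖ ^ 2 ∧
    ‖a - b'‖ ^ 2 + min (1 - Real.sqrt (2 * c / γ)) ((1 - 1 / (1 + c)^2) / 4) * ‖b - b'‖ ^ 2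
      ≤ ‖b - a‖ ^ 2 := by
  rw [sub_zero] at hang hreg
  have hs : 0 < ‖b - a‖ := lt_of_lt_of_le hr hrs
  have hrw : 0 < ‖a - b'‖ ^ ω := Real.rpow_pos_of_pos hr ω
  have e1 : ‖b - b'‖ ^ 2 = ‖b - a‖ ^ 2 - 2 * ⟪b - a, b' - a⟫ + ‖a - b'‖ ^ 2 := by
    have := norm_sub_sq_real (b - a) (b' - a)
    rw [sub_sub_sub_cancel_right, norm_sub_rev b' a] at this
    exact this
  have e2 : ‖b - a‖ ^ 2 = ‖b - b'‖ ^ 2 - 2 * ⟪b - b', a - b'⟫ + ‖a - b'‖ ^ 2 := by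
    have := norm_sub_sq_real (b - b') (a - b')
    rw [sub_sub_sub_cancel_right] at this
    exact this
  have i1 : ⟪b - a, b' - a⟫ = cosAngle (b - a) (b' - a) * (‖b - a‖ * ‖a - b'‖) := by
    unfold cosAngle
    rw [norm_sub_rev b' a]
    field_simp
  have i2 : ⟪b - b', a - b'⟫ = cosAngle (b - b') (a - b') * (‖b - b'‖ * ‖a - b'‖) := by
    unfold cosAngle
    by_cases hd : ‖b - b'‖ = 0
    · have : b - b' = 0 := norm_eq_zero.mp hd
      simp [this]
    · field_simp
  have tri : ‖b - b'‖ ≤ ‖b - a‖ + ‖a - b'‖ := norm_sub_le_norm_sub_add_norm_sub b a b'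
  have hd0 : 0 ≤ ‖b - b'‖ := norm_nonneg _
  rw [i1] at e1
  rw [i2] at e2
  rw [le_div_iff₀ hrw] at hang
  generalize cosAngle (b - a) (b' - a) = x at *
  generalize cosAngle (b - b') (a - b') = y at *
  have hw2 : ‖a - b'‖ ^ ω = (‖a - b'‖ ^ (ω/2)) ^ 2 := by
    rw [← Real.rpow_natCast, ← Real.rpow_mul hr.le]; congr 1; push_cast; ring
  have hp : 0 < ‖a - b'‖ ^ (ω/2) := Real.rpow_pos_of_pos hr _
  rw [hw2] at hang hrw ⊢
  generalize ‖a - b'‖ ^ (ω/2) = p at *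
  generalize ‖a - b'‖ = r at *
  generalize ‖b - a‖ = s at *
  generalize ‖b - b'‖ = d at *
  have D : 2 * γ * (r ^ 2 * p ^ 2) ≤ d ^ 2 := by
    have h1 : r * s * (γ * p ^ 2) ≤ r * s * (1 - x) := mul_le_mul_of_nonneg_left hang (by positivity)
    have h2 : r * r * (γ * p ^ 2) ≤ r * s * (γ * p ^ 2) := by gcongr
    nlinarith [sq_nonneg (s - r)]
  refine ⟨D, ?_⟩
  by_cases hcase : s ≤ (1 + c) * r
  · have hy := hreg hcase
    have hm : min (1 - Real.sqrt (2 * c / γ)) ((1 - 1 / (1 + c)^2) / 4) * d^2 ≤ (1 - Real.sqrt (2 * c / γ)) * d^2 :=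
      mul_le_mul_of_nonneg_right (min_le_left _ _) (sq_nonneg d)
    have h3 : y * (d * r) ≤ Real.sqrt c * p * (d * r) := mul_le_mul_of_nonneg_right hy (by positivity)
    have h4 : Real.sqrt (2 * γ) * (r * p) ≤ d := by
      apply le_of_sq_le_sq _ hd0
      rw [mul_pow, Real.sq_sqrt (by positivity)]
      linarith [mul_pow r p 2]
    have h5 : Real.sqrt (2 * c / γ) * Real.sqrt (2 * γ) = 2 * Real.sqrt c := by
      rw [← Real.sqrt_mul (by positivity), show 2 * c / γ * (2 * γ) = 2 ^ 2 * c by field_simp,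
        Real.sqrt_mul (by positivity), Real.sqrt_sq (by norm_num)]
    have h6 : Real.sqrt (2 * c / γ) * d * (Real.sqrt (2 * γ) * (r * p)) ≤ Real.sqrt (2 * c / γ) * d * d := by
      gcongr
    have h7 : Real.sqrt (2 * c / γ) * d * (Real.sqrt (2 * γ) * (r * p)) = 2 * Real.sqrt c * (d * r * p) := by
      rw [← h5]; ring
    nlinarith
  · push Not at hcase
    have hm : min (1 - Real.sqrt (2 * c / γ)) ((1 - 1 / (1 + c)^2) / 4) * d^2 ≤ ((1 - 1 / (1 + c)^2) / 4) * d^2 :=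
      mul_le_mul_of_nonneg_right (min_le_right _ _) (sq_nonneg d)
    have h1 : r ^ 2 ≤ 1 / (1 + c)^2 * s ^ 2 := by
      rw [one_div, inv_mul_eq_div, le_div_iff₀ (by positivity)]
      have : ((1 + c) * r)^2 ≤ s^2 := by gcongr
      linarith [mul_pow (1+c) r 2]
    have h0 : 0 ≤ 1 - 1 / (1 + c)^2 := by
      rw [sub_nonneg, div_le_one (by positivity)]; nlinarith
    have h2 : d ^ 2 ≤ 4 * s ^ 2 := by nlinarith
    nlinarith [mul_le_mul_of_nonneg_left h2 h0]

lemma s11_concave (t t' θ : ℝ) (ht' : 0 ≤ t') (h : t' ≤ t) (h1 : 1/2 ≤ θ) (h2 : θ < 1) :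
    (1 - θ) * (t - t') ≤ t ^ θ * (t ^ (1 - θ) - t' ^ (1 - θ)) := by
  rcases (ht'.trans h).eq_or_lt with h0 | h0
  · have : t' = 0 := le_antisymm (h0 ▸ h) ht'
    subst this; subst h0; simp
  · have hb := rpow_one_add_le_one_add_mul_self (s := t'/t - 1) (p := 1 - θ)
      (by have : 0 ≤ t'/t := by positivity
          linarith) (by linarith) (by linarith)
    rw [add_sub_cancel, Real.div_rpow ht' h0.le, div_le_iff₀ (by positivity)] at hb
    have hm : t ^ θ * t ^ (1 - θ) = t := by
      rw [← Real.rpow_add h0]; simp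
    have h3 : t ^ θ * t' ^ (1 - θ) ≤ t ^ θ * ((1 + (1 - θ) * (t' / t - 1)) * t ^ (1 - θ)) :=
      mul_le_mul_of_nonneg_left hb (by positivity)
    have h4 : t ^ θ * ((1 + (1 - θ) * (t' / t - 1)) * t ^ (1 - θ)) = t + (1 - θ) * (t' - t) := by
      calc _ = (1 + (1 - θ) * (t' / t - 1)) * (t ^ θ * t ^ (1 - θ)) := by ring
        _ = _ := by rw [hm]; field_simp
    have h5 : t ^ θ * (t ^ (1 - θ) - t' ^ (1 - θ)) = t - t ^ θ * t' ^ (1 - θ) := by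
      rw [mul_sub, hm]
    rw [h5]; linarith

lemma s11_sublin (t : ℕ → ℝ) (m p : ℝ) (hm : 0 < m) (hp : 1 < p)
    (h : ∀ k, t (k+1) + m * t (k+1) ^ p ≤ t k) :
    ∃ C, 0 ≤ C ∧ ∀ k, t k ≤ C * ((k:ℝ) + 1) ^ (-(1/(p-1))) := by
  set β := 1/(p-1) with hβ
  have hp1 : 0 < p - 1 := by linarith
  have hβ0 : 0 < β := by positivity
  set C := max (t 0) (max 1 ((β * 2 ^ (β+1) / m) ^ β)) with hC
  have hC1 : 1 ≤ C := (le_max_left _ _).trans (le_max_right _ _)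
  have hC2 : β * 2 ^ (β+1) ≤ m * C ^ (p-1) := by
    have : (β * 2 ^ (β+1) / m) ^ β ≤ C := (le_max_right _ _).trans (le_max_right _ _)
    have h2 : ((β * 2 ^ (β+1) / m) ^ β)^(p-1) ≤ C^(p-1) := by
      apply Real.rpow_le_rpow (by positivity) this hp1.le
    rw [← Real.rpow_mul (by positivity), show β * (p-1) = 1 by rw [hβ]; field_simp, Real.rpow_one,
      div_le_iff₀ hm] at h2
    linarith
  refine ⟨C, by linarith, fun k => ?_⟩
  induction k with
  | zero => simp [hC]
  | succ k ih =>
    by_contra! hlt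
    push_cast at hlt
    set x : ℝ := (k:ℝ) + 1 with hx
    have hx1 : 1 ≤ x := by rw [hx]; linarith [(Nat.cast_nonneg k : (0:ℝ) ≤ k)]
    have hx0 : 0 < x := by linarith
    have hy0 : 0 < x + 1 := by linarith
    have h1 : (C * (x+1)^(-β))^p ≤ t (k+1)^p :=
      Real.rpow_le_rpow (by positivity) hlt.le (by linarith)
    have h2 : (C * (x+1)^(-β))^p = C * C^(p-1) * (x+1)^(-β-1) := by
      rw [Real.mul_rpow (by linarith) (by positivity), ← Real.rpow_mul hy0.le]
      congr 1
      · nth_rewrite 2 [← Real.rpow_one C]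
        rw [← Real.rpow_add (by linarith)]; congr 1; ring
      · congr 1
        rw [hβ]; field_simp; ring
    have h3 : x^(-β) - (x+1)^(-β) ≤ β * x^(-β-1) := by
      have e : (x+1)^(-β) = x^(-β) * (1 + 1/x)^(-β) := by
        rw [← Real.mul_rpow hx0.le (by positivity)]; congr 1; field_simp
      have e' : x^(-β-1) = x^(-β) * (1/x) := by
        rw [Real.rpow_sub_one hx0.ne']; ring
      have g : 1 - β * (1/x) ≤ (1 + 1/x)^(-β) := by
        have ga : (1 + 1/x) ≤ Real.exp (1/x) := by linarith [Real.add_one_le_exp (1/x)]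
        have gb : (Real.exp (1/x))^(-β) ≤ (1 + 1/x)^(-β) :=
          Real.rpow_le_rpow_of_nonpos (by positivity) ga (by linarith)
        rw [← Real.exp_mul] at gb
        linarith [Real.add_one_le_exp (1/x * (-β))]
      have hxp : 0 < x^(-β) := by positivity
      rw [e, e']
      nlinarith
    have h4 : x^(-β-1) ≤ 2^(β+1) * (x+1)^(-β-1) := by
      have : (2*x)^(-β-1) ≤ (x+1)^(-β-1) :=
        Real.rpow_le_rpow_of_nonpos hy0 (by linarith) (by linarith)
      rw [Real.mul_rpow (by norm_num) hx0.le] at this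
      calc x^(-β-1) = 2^(β+1) * (2^(-β-1) * x^(-β-1)) := by
            rw [← mul_assoc, ← Real.rpow_add (by norm_num)]; simp
        _ ≤ _ := by gcongr
    have hk := h k
    have hz : 0 < (x+1)^(-β-1) := by positivity
    have hC0 : 0 < C := by linarith
    have h5 : C * (x^(-β) - (x+1)^(-β)) ≤ C * (β * (2^(β+1) * (x+1)^(-β-1))) := by
      apply mul_le_mul_of_nonneg_left _ hC0.le
      exact h3.trans (mul_le_mul_of_nonneg_left h4 hβ0.le)
    have h6 : C * (x+1)^(-β-1) * (β * 2^(β+1)) ≤ C * (x+1)^(-β-1) * (m * C^(p-1)) := by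
      gcongr
    have h7 : m * (C * C^(p-1) * (x+1)^(-β-1)) ≤ m * t (k+1)^p := by
      rw [← h2]; gcongr
    nlinarith

lemma s11_bigO (x f : ℕ → ℝ) (K k0 : ℕ) (C : ℝ) (hf : ∀ k, k0 ≤ k → 0 < f k)
    (h : ∀ k, K ≤ k → k0 ≤ k → x k ≤ C * f k) :
    ∃ C', 0 ≤ C' ∧ ∀ k, k0 ≤ k → x k ≤ C' * f k := by
  have hs : ∀ i ∈ Finset.range K, 0 ≤ |x i / f i| := fun _ _ => abs_nonneg _
  have hs0 := Finset.sum_nonneg hs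
  refine ⟨|C| + ∑ i ∈ Finset.range K, |x i / f i|, by positivity, fun k hk => ?_⟩
  have hfk := hf k hk
  by_cases hK : K ≤ k
  · refine (h k hK hk).trans ?_
    gcongr
    linarith [le_abs_self C]
  · have : |x k / f k| ≤ ∑ i ∈ Finset.range K, |x i / f i| :=
      Finset.single_le_sum hs (Finset.mem_range.mpr (by omega))
    rw [← div_le_iff₀ hfk]
    linarith [le_abs_self (x k / f k), abs_nonneg C]

lemma s11_core {n : ℕ} (a b : ℕ → EuclideanSpace ℝ (Fin n)) (S : Set (EuclideanSpace ℝ (Fin n)))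
    (ρ δ l m θ C : ℝ) (hl : 0 < l) (hm : 0 < m) (hθ1 : 1/2 ≤ θ) (hθ2 : θ < 1)
    (hC : C = 1 / ((1 - θ) * l * m))
    (hr : ∀ k, ‖a (k+1) - b (k+1)‖ ≤ ‖b k - a (k+1)‖)
    (hs : ∀ k, ‖b k - a (k+1)‖ ≤ ‖a k - b k‖)
    (hblock : ∀ k, infDist (a (k+1)) S < ρ → infDist (b (k+1)) S < ρ → ‖a (k+1) - b (k+1)‖ < δ →
      m * (‖a (k+1) - b (k+1)‖ ^ 2) ^ θ ≤ ‖b k - b (k+1)‖ ∧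
      ‖a (k+1) - b (k+1)‖ ^ 2 + l * ‖b k - b (k+1)‖ ^ 2 ≤ ‖a k - b k‖ ^ 2)
    (h0 : infDist (b 0) S ≤ δ) (hr0 : ‖a 0 - b 0‖ < δ)
    (hρ : 7 * δ + C * (δ ^ 2) ^ (1 - θ) < ρ) :
    (∀ k, ‖a k - b k‖ < δ) ∧ (∀ k, ‖b k - b (k+1)‖ ≤ 2 * ‖a k - b k‖) ∧
    (∀ k, m * (‖a (k+1) - b (k+1)‖ ^ 2) ^ θ ≤ ‖b k - b (k+1)‖ ∧
      ‖a (k+1) - b (k+1)‖ ^ 2 + l * ‖b k - b (k+1)‖ ^ 2 ≤ ‖a k - b k‖ ^ 2) ∧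
    (∀ k j, ‖b (k+1) - b (k+1+j)‖ ≤
      ‖b k - b (k+1)‖ + C * (‖a (k+1) - b (k+1)‖ ^ 2) ^ (1 - θ)) := by
  have h1θ : 0 < 1 - θ := by linarith
  have hC0 : 0 < C := by rw [hC]; positivity
  have hmono : ∀ k, ‖a (k+1) - b (k+1)‖ ≤ ‖a k - b k‖ := fun k => (hr k).trans (hs k)
  have hrδ : ∀ k, ‖a k - b k‖ < δ := by
    intro k
    induction k with
    | zero => exact hr0
    | succ k ih => exact (hmono k).trans_lt ih
  have hd2 : ∀ k, ‖b k - b (k+1)‖ ≤ 2 * ‖a k - b k‖ := fun k => by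
    linarith [norm_sub_le_norm_sub_add_norm_sub (b k) (a (k+1)) (b (k+1)), hmono k, hs k]
  have hinf : ∀ x y : EuclideanSpace ℝ (Fin n), infDist x S ≤ infDist y S + ‖x - y‖ := fun x y => by
    rw [← dist_eq_norm]; exact infDist_le_infDist_add_dist
  have hδ0 : 0 < δ := (norm_nonneg _).trans_lt hr0
  -- one-step descent
  have hdesc : ∀ k, (m * (‖a (k+1) - b (k+1)‖ ^ 2) ^ θ ≤ ‖b k - b (k+1)‖) →
      (‖a (k+2) - b (k+2)‖ ^ 2 + l * ‖b (k+1) - b (k+2)‖ ^ 2 ≤ ‖a (k+1) - b (k+1)‖ ^ 2) →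
      ‖b (k+1) - b (k+2)‖ + (‖b (k+1) - b (k+2)‖ + C * (‖a (k+2) - b (k+2)‖ ^ 2) ^ (1 - θ)) ≤
      ‖b k - b (k+1)‖ + C * (‖a (k+1) - b (k+1)‖ ^ 2) ^ (1 - θ) := by
    intro k h1 h2
    have hm1 : ‖a (k+2) - b (k+2)‖ ^ 2 ≤ ‖a (k+1) - b (k+1)‖ ^ 2 :=
      pow_le_pow_left₀ (norm_nonneg _) (hmono (k+1)) 2
    have hcc := s11_concave (‖a (k+1) - b (k+1)‖ ^ 2) (‖a (k+2) - b (k+2)‖ ^ 2) θ (by positivity)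
      hm1 hθ1 hθ2
    have hφ : (‖a (k+2) - b (k+2)‖ ^ 2) ^ (1 - θ) ≤ (‖a (k+1) - b (k+1)‖ ^ 2) ^ (1 - θ) :=
      Real.rpow_le_rpow (by positivity) hm1 h1θ.le
    have hd : 0 ≤ ‖b k - b (k+1)‖ := norm_nonneg _
    have hd' : 0 ≤ ‖b (k+1) - b (k+2)‖ := norm_nonneg _
    generalize (‖a (k+2) - b (k+2)‖ ^ 2) ^ (1 - θ) = f' at *
    generalize (‖a (k+1) - b (k+1)‖ ^ 2) ^ (1 - θ) = f at *
    generalize (‖a (k+1) - b (k+1)‖ ^ 2) ^ θ = w at *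
    generalize ‖a (k+2) - b (k+2)‖ ^ 2 = t' at *
    generalize ‖a (k+1) - b (k+1)‖ ^ 2 = t at *
    generalize ‖b (k+1) - b (k+2)‖ = d' at *
    generalize ‖b k - b (k+1)‖ = d at *
    have e1 : (1 - θ) * (l * d' ^ 2) ≤ w * (f - f') :=
      (mul_le_mul_of_nonneg_left (by linarith) h1θ.le).trans hcc
    have e2 : m * ((1 - θ) * (l * d' ^ 2)) ≤ d * (f - f') := by
      calc m * ((1 - θ) * (l * d' ^ 2)) ≤ m * (w * (f - f')) := by gcongr
        _ = (m * w) * (f - f') := by ring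
        _ ≤ _ := mul_le_mul_of_nonneg_right h1 (by linarith)
    have e3 : d' ^ 2 ≤ d * (C * (f - f')) := by
      have : d * (C * (f - f')) = (d * (f - f')) / ((1 - θ) * l * m) := by rw [hC]; ring
      rw [this, le_div_iff₀ (by positivity)]
      linarith
    have hg : 0 ≤ C * (f - f') := mul_nonneg hC0.le (by linarith)
    have e4 : 2 * d' ≤ d + C * (f - f') := by
      apply le_of_sq_le_sq _ (by positivity)
      nlinarith [sq_nonneg (d - C * (f - f'))]
    linarith
  have hW : ‖b 0 - b 1‖ + C * (‖a 1 - b 1‖ ^ 2) ^ (1 - θ) ≤ 2 * δ + C * (δ ^ 2) ^ (1 - θ) := by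
    have : (‖a 1 - b 1‖ ^ 2) ^ (1 - θ) ≤ (δ ^ 2) ^ (1 - θ) :=
      Real.rpow_le_rpow (by positivity) (pow_le_pow_left₀ (norm_nonneg _) (hrδ 1).le 2) h1θ.le
    have h2 := mul_le_mul_of_nonneg_left this hC0.le
    have h3 := hd2 0
    simp only [zero_add] at h3
    linarith
  have hCδ : 0 ≤ C * (δ ^ 2) ^ (1 - θ) := by positivity
  have hP : ∀ k, (m * (‖a (k+1) - b (k+1)‖ ^ 2) ^ θ ≤ ‖b k - b (k+1)‖ ∧
      ‖a (k+1) - b (k+1)‖ ^ 2 + l * ‖b k - b (k+1)‖ ^ 2 ≤ ‖a k - b k‖ ^ 2) ∧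
      ‖b k - b (k+1)‖ + C * (‖a (k+1) - b (k+1)‖ ^ 2) ^ (1 - θ) + ‖b (k+1) - b 1‖ ≤
       ‖b 0 - b 1‖ + C * (‖a 1 - b 1‖ ^ 2) ^ (1 - θ) := by
    intro k
    induction k with
    | zero =>
      refine ⟨hblock 0 ?_ ?_ (hrδ 1), by simp⟩
      · have := hinf (a (0+1)) (b 0)
        rw [norm_sub_rev] at this
        linarith [hs 0]
      · have := hinf (b (0+1)) (b 0)
        rw [norm_sub_rev] at this
        linarith [hd2 0]
    | succ k ih =>
      obtain ⟨⟨i1, i2⟩, i3⟩ := ih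
      have hb1 : infDist (b 1) S ≤ 3 * δ := by
        have := hinf (b (0+1)) (b 0)
        rw [norm_sub_rev] at this
        simp only [zero_add] at this
        have h3 := hd2 0
        simp only [zero_add] at h3
        linarith
      have hφ0 : 0 ≤ C * (‖a (k+1) - b (k+1)‖ ^ 2) ^ (1 - θ) := by positivity
      have hbk : infDist (b (k+1)) S ≤ 5 * δ + C * (δ ^ 2) ^ (1 - θ) := by
        linarith [hinf (b (k+1)) (b 1), norm_nonneg (b k - b (k+1))]
      have hB := hblock (k+1) (by
          have := hinf (a (k+1+1)) (b (k+1))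
          rw [norm_sub_rev] at this
          linarith [hs (k+1), hrδ (k+1)]) (by
          have := hinf (b (k+1+1)) (b (k+1))
          rw [norm_sub_rev] at this
          linarith [hd2 (k+1), hrδ (k+1)]) (hrδ _)
      refine ⟨hB, ?_⟩
      have := hdesc k i1 hB.2
      have t := norm_sub_le_norm_sub_add_norm_sub (b (k+2)) (b (k+1)) (b 1)
      rw [norm_sub_rev (b (k+2)) (b (k+1))] at t
      show ‖b (k+1) - b (k+2)‖ + C * (‖a (k+2) - b (k+2)‖ ^ 2) ^ (1 - θ) + ‖b (k+2) - b 1‖ ≤ _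
      linarith
  refine ⟨hrδ, hd2, fun k => (hP k).1, fun k j => ?_⟩
  have key : ‖b (k+1) - b (k+1+j)‖ + (‖b (k+j) - b (k+j+1)‖ + C * (‖a (k+j+1) - b (k+j+1)‖ ^ 2) ^ (1 - θ)) ≤
      ‖b k - b (k+1)‖ + C * (‖a (k+1) - b (k+1)‖ ^ 2) ^ (1 - θ) := by
    induction j with
    | zero => simp
    | succ j ih =>
      have := hdesc (k+j) (hP (k+j)).1.1 (hP (k+j+1)).1.2
      have t := norm_sub_le_norm_sub_add_norm_sub (b (k+1)) (b (k+j+1)) (b (k+j+2))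
      rw [show k+1+j = k+j+1 by ring] at ih
      rw [show k+1+(j+1) = k+j+2 by ring, show k+(j+1)+1 = k+j+2 by ring, show k+(j+1) = k+j+1 by ring]
      linarith
  have : 0 ≤ C * (‖a (k+j+1) - b (k+j+1)‖ ^ 2) ^ (1 - θ) := by positivity
  linarith [norm_nonneg (b (k+j) - b (k+j+1))]

lemma s11_rate {n : ℕ} (a b : ℕ → EuclideanSpace ℝ (Fin n))
    (l m θ C : ℝ) (hl : 0 < l) (hm : 0 < m) (hθ1 : 1/2 ≤ θ) (hθ2 : θ < 1) (hC : 0 < C)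
    (hr1 : ∀ k, ‖a k - b k‖ ≤ 1)
    (hd2 : ∀ k, ‖b k - b (k+1)‖ ≤ 2 * ‖a k - b k‖)
    (hblock : ∀ k, m * (‖a (k+1) - b (k+1)‖ ^ 2) ^ θ ≤ ‖b k - b (k+1)‖ ∧
      ‖a (k+1) - b (k+1)‖ ^ 2 + l * ‖b k - b (k+1)‖ ^ 2 ≤ ‖a k - b k‖ ^ 2)
    (htail : ∀ k j, ‖b (k+1) - b (k+1+j)‖ ≤
      ‖b k - b (k+1)‖ + C * (‖a (k+1) - b (k+1)‖ ^ 2) ^ (1 - θ)) :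
    ∃ x, Tendsto a atTop (𝓝 x) ∧ Tendsto b atTop (𝓝 x) ∧
      (1/2 < θ → ∃ M, ∀ k : ℕ, ‖b k - x‖ ≤ M * ((k:ℝ) + 1) ^ (-((1 - θ)/(2*θ - 1))) ∧
        ‖a k - x‖ ≤ M * ((k:ℝ) + 1) ^ (-((1 - θ)/(2*θ - 1)))) ∧
      (θ = 1/2 → ∃ M q : ℝ, 0 < q ∧ q < 1 ∧ ∀ k : ℕ, ‖b k - x‖ ≤ M * q ^ k ∧
        ‖a k - x‖ ≤ M * q ^ k) := by
  have h1θ : 0 < 1 - θ := by linarith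
  set φ : ℕ → ℝ := fun k => (‖a k - b k‖ ^ 2) ^ (1 - θ) with hφ
  have hstep : ∀ k, ‖a (k+1) - b (k+1)‖ ^ 2 + (l * m^2) * (‖a (k+1) - b (k+1)‖ ^ 2) ^ (2*θ)
      ≤ ‖a k - b k‖ ^ 2 := by
    intro k
    obtain ⟨h1, h2⟩ := hblock k
    have e : (‖a (k+1) - b (k+1)‖ ^ 2) ^ (2*θ) = ((‖a (k+1) - b (k+1)‖ ^ 2) ^ θ)^2 := by
      rw [mul_comm 2 θ, Real.rpow_mul (by positivity), Real.rpow_ofNat]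
    rw [e]
    have := pow_le_pow_left₀ (by positivity) h1 2
    have := mul_le_mul_of_nonneg_left this hl.le
    linarith [mul_pow m ((‖a (k+1) - b (k+1)‖ ^ 2) ^ θ) 2,
      congrArg (l * ·) (mul_pow m ((‖a (k+1) - b (k+1)‖ ^ 2) ^ θ) 2)]
  have hK : 0 < l * m^2 := by positivity
  have hsub : 1/2 < θ → ∃ M, 0 ≤ M ∧ ∀ k : ℕ, φ k ≤ M * ((k:ℝ) + 1) ^ (-((1 - θ)/(2*θ - 1))) := by
    intro hθ
    obtain ⟨M, hM, h⟩ := s11_sublin (fun k => ‖a k - b k‖ ^ 2) (l * m^2) (2*θ) hK (by linarith) hstep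
    refine ⟨M ^ (1-θ), by positivity, fun k => ?_⟩
    have hk : (0:ℝ) ≤ (k:ℝ) + 1 := by positivity
    have := Real.rpow_le_rpow (by positivity) (h k) h1θ.le
    rw [Real.mul_rpow hM (by positivity), ← Real.rpow_mul hk] at this
    convert this using 3
    ring
  have hlin : θ = 1/2 → ∃ M q : ℝ, 0 ≤ M ∧ 0 < q ∧ q < 1 ∧ ∀ k : ℕ, φ k ≤ M * q ^ k := by
    intro hθ
    set q0 := 1 / (1 + l * m^2) with hq0
    have hq0p : 0 < q0 := by positivity
    have hq1 : q0 < 1 := by rw [hq0, div_lt_one (by positivity)]; linarith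
    refine ⟨φ 0, q0 ^ (1-θ), by positivity, by positivity,
      Real.rpow_lt_one hq0p.le hq1 h1θ, fun k => ?_⟩
    induction k with
    | zero => simp
    | succ k ih =>
      have h1 := hstep k
      rw [hθ, show (2:ℝ) * (1/2) = 1 by norm_num, Real.rpow_one] at h1
      have h2 : ‖a (k+1) - b (k+1)‖ ^ 2 ≤ ‖a k - b k‖ ^ 2 * q0 := by
        rw [hq0, mul_one_div, le_div_iff₀ (by positivity)]; linarith
      have h3 := Real.rpow_le_rpow (by positivity) h2 h1θ.le
      rw [Real.mul_rpow (by positivity) hq0p.le] at h3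
      calc φ (k+1) ≤ φ k * q0 ^ (1-θ) := h3
        _ ≤ (φ 0 * (q0^(1-θ))^k) * q0^(1-θ) := by gcongr
        _ = _ := by rw [pow_succ]; ring
  have hrφ : ∀ k, ‖a k - b k‖ ≤ φ k := by
    intro k
    have : (‖a k - b k‖ ^ 2) ^ (1/2 : ℝ) ≤ φ k :=
      Real.rpow_le_rpow_of_exponent_ge' (by positivity) (pow_le_one₀ (norm_nonneg _) (hr1 k))
        h1θ.le (by linarith)
    rwa [← Real.sqrt_eq_rpow, Real.sqrt_sq (norm_nonneg _)] at this
  have hφ0 : ∀ k, 0 ≤ φ k := fun k => by positivity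
  have hφmono : ∀ k, φ (k+1) ≤ φ k := by
    intro k
    apply Real.rpow_le_rpow (by positivity) _ h1θ.le
    have : 0 ≤ l * ‖b k - b (k+1)‖ ^ 2 := by positivity
    linarith [(hblock k).2]
  have htend : Tendsto φ atTop (𝓝 0) := by
    rcases hθ1.eq_or_lt with h | h
    · obtain ⟨M, q, hM, hq0, hq1, hb⟩ := hlin h.symm
      have : Tendsto (fun k : ℕ => M * q ^ k) atTop (𝓝 (M * 0)) :=
        (tendsto_pow_atTop_nhds_zero_of_lt_one hq0.le hq1).const_mul M
      rw [mul_zero] at this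
      exact squeeze_zero hφ0 hb this
    · obtain ⟨M, hM, hb⟩ := hsub h
      have hp : 0 < (1 - θ)/(2*θ - 1) := div_pos h1θ (by linarith)
      have h2 : Tendsto (fun k : ℕ => (k:ℝ) + 1) atTop atTop :=
        tendsto_atTop_add_const_right _ _ tendsto_natCast_atTop_atTop
      have : Tendsto (fun k : ℕ => M * ((k:ℝ) + 1) ^ (-((1 - θ)/(2*θ - 1)))) atTop (𝓝 (M * 0)) :=
        ((tendsto_rpow_neg_atTop hp).comp h2).const_mul M
      rw [mul_zero] at this
      exact squeeze_zero hφ0 hb this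
  have hcau : ∀ k j, ‖b k - b (k + j)‖ ≤ (4 + C) * φ k := by
    intro k j
    rcases j with _ | j
    · simp only [add_zero, sub_self, norm_zero]
      exact mul_nonneg (by linarith) (hφ0 k)
    · have t := norm_sub_le_norm_sub_add_norm_sub (b k) (b (k+1)) (b (k+1+j))
      have h1 : C * φ (k+1) ≤ C * φ k := mul_le_mul_of_nonneg_left (hφmono k) hC.le
      have h2 := htail k j
      rw [show k + (j+1) = k+1+j by ring]
      change _ ≤ _ + C * φ (k+1) at h2
      linarith [hd2 k, hrφ k]
  have hcs : CauchySeq b := by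
    refine cauchySeq_of_le_tendsto_0' (fun k => (4 + C) * φ k) (fun k j hkj => ?_) ?_
    · obtain ⟨i, rfl⟩ := Nat.exists_eq_add_of_le hkj
      rw [dist_eq_norm]; exact hcau k i
    · simpa using htend.const_mul (4 + C)
  obtain ⟨x, hx⟩ := cauchySeq_tendsto_of_complete hcs
  have hbx : ∀ k, ‖b k - x‖ ≤ (5 + C) * φ k := by
    intro k
    have h1 : Tendsto (fun j => ‖b k - b (k + j)‖) atTop (𝓝 ‖b k - x‖) := by
      have : Tendsto (fun j => b (k + j)) atTop (𝓝 x) := by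
        simp_rw [add_comm k]
        exact (tendsto_add_atTop_iff_nat k).2 hx
      exact (tendsto_const_nhds.sub this).norm
    have := le_of_tendsto' h1 (hcau k)
    linarith [hφ0 k]
  have hax : ∀ k, ‖a k - x‖ ≤ (5 + C) * φ k := by
    intro k
    have h1 : Tendsto (fun j => ‖b k - b (k + j)‖) atTop (𝓝 ‖b k - x‖) := by
      have : Tendsto (fun j => b (k + j)) atTop (𝓝 x) := by
        simp_rw [add_comm k]
        exact (tendsto_add_atTop_iff_nat k).2 hx
      exact (tendsto_const_nhds.sub this).norm
    have := le_of_tendsto' h1 (hcau k)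
    linarith [hφ0 k, hrφ k, norm_sub_le_norm_sub_add_norm_sub (a k) (b k) x]
  refine ⟨x, ?_, hx, fun h => ?_, fun h => ?_⟩
  · rw [tendsto_iff_norm_sub_tendsto_zero]
    exact squeeze_zero (fun _ => norm_nonneg _) hax (by simpa using htend.const_mul (5 + C))
  · obtain ⟨M, hM, hb⟩ := hsub h
    refine ⟨(5 + C) * M, fun k => ?_⟩
    have := mul_le_mul_of_nonneg_left (hb k) (show 0 ≤ 5 + C by linarith)
    rw [mul_assoc]
    exact ⟨(hbx k).trans this, (hax k).trans this⟩
  · obtain ⟨M, q, hM, hq0, hq1, hb⟩ := hlin h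
    refine ⟨(5 + C) * M, q, hq0, hq1, fun k => ?_⟩
    have := mul_le_mul_of_nonneg_left (hb k) (show 0 ≤ 5 + C by linarith)
    rw [mul_assoc]
    exact ⟨(hbx k).trans this, (hax k).trans this⟩

/-- Corollary 4 (rate of convergence in the feasible case `r* = 0`).
Both sequences converge to a common point `b* ∈ A ∩ B`, with sublinear rate
`O(k^{-(1-θ)/(2θ-1)})` for `θ ∈ (1/2, 1)` and R-linearly for `θ = 1/2`. -/
theorem statement11 {n : ℕ} (A B Astar Bstar : Set (EuclideanSpace ℝ (Fin n)))
    (hAne : A.Nonempty) (hAcl : IsClosed A) (hBne : B.Nonempty) (hBcl : IsClosed B)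
    (hgap : IsGap A B Astar Bstar 0)
    (hAstar : Astar.Nonempty) (hAstarcomp : IsCompact Astar)
    (hBstar : Bstar.Nonempty) (hBstarcomp : IsCompact Bstar)
    (hsat : SaturatedGap A B Astar Bstar)
    (θ γ c ω : ℝ) (hθ1 : 1/2 ≤ θ) (hθ2 : θ < 1) (hω : ω = 4*θ - 2)
    (hγ : 0 < γ) (hc1 : 0 < c) (hc2 : c < γ/2)
    (hangle : AngleCond A B Astar Bstar 0 γ ω)
    (hholder : HolderRegularGap A B Astar 0 c (ω/2)) :
    ∃ δ > (0:ℝ), ∀ a b : ℕ → EuclideanSpace ℝ (Fin n),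
      IsAltSeq A B a b → ReachesGap Astar Bstar 0 δ a b →
      ∃ bstar : EuclideanSpace ℝ (Fin n), bstar ∈ A ∧ bstar ∈ B ∧
        Tendsto a atTop (𝓝 bstar) ∧ Tendsto b atTop (𝓝 bstar) ∧
        (1/2 < θ →
          ∃ C : ℝ, ∀ k : ℕ, 1 ≤ k →
            ‖b k - bstar‖ ≤ C * (k : ℝ) ^ (-((1 - θ)/(2*θ - 1))) ∧
            ‖a k - bstar‖ ≤ C * (k : ℝ) ^ (-((1 - θ)/(2*θ - 1)))) ∧
        (θ = 1/2 →
          ∃ C : ℝ, 0 ≤ C ∧ ∃ q : ℝ, 0 < q ∧ q < 1 ∧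
            ∀ k : ℕ, ‖b k - bstar‖ ≤ C * q ^ k ∧ ‖a k - bstar‖ ≤ C * q ^ k) := by
  obtain ⟨U, V, hU, hBU, hV, hAV, hang⟩ := hangle
  obtain ⟨V', hV', hAV', η, hη, hreg⟩ := hholder
  obtain ⟨hAA, hBB, -, hg1, hg2⟩ := hgap
  have hAB : Astar ⊆ Bstar := by
    intro x hx
    obtain ⟨y, hy, -, h⟩ := hg1 x hx
    rw [norm_sub_eq_zero_iff] at h
    exact h ▸ hy
  have hBA : Bstar ⊆ Astar := by
    intro y hy
    obtain ⟨x, hx, -, h⟩ := hg2 y hy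
    rw [norm_sub_eq_zero_iff] at h
    exact h ▸ hx
  have hEq : Astar = Bstar := hAB.antisymm hBA
  obtain ⟨ρ, hρ, hthick⟩ := hAstarcomp.exists_thickening_subset_open (hU.inter (hV.inter hV'))
    (fun x hx => ⟨hBU (hAB hx), hAV hx, hAV' hx⟩)
  have h1θ : 0 < 1 - θ := by linarith
  set l := min (1 - Real.sqrt (2 * c / γ)) ((1 - 1 / (1 + c)^2) / 4) with hl
  have hl0 : 0 < l := by
    apply lt_min
    · rw [sub_pos, Real.sqrt_lt' one_pos, div_lt_iff₀ hγ]; linarith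
    · have : 1 / (1 + c)^2 < 1 := by rw [div_lt_one (by positivity)]; nlinarith
      linarith
  have hl1 : l ≤ 1 := (min_le_left _ _).trans (by linarith [Real.sqrt_nonneg (2 * c / γ)])
  set m := Real.sqrt (2 * γ) with hm
  have hm0 : 0 < m := Real.sqrt_pos.2 (by positivity)
  set C := 1 / ((1 - θ) * l * m) with hC
  have hC0 : 0 < C := by positivity
  have hδex : ∃ δ, 0 < δ ∧ δ ≤ 1 ∧ δ ≤ η ∧ 7 * δ + C * (δ ^ 2) ^ (1 - θ) < ρ := by
    have hcont : Continuous (fun δ : ℝ => 7 * δ + C * (δ ^ 2) ^ (1 - θ)) := by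
      have : Continuous (fun δ : ℝ => (δ ^ 2) ^ (1 - θ)) :=
        (continuous_pow 2).rpow_const (fun _ => Or.inr h1θ.le)
      fun_prop
    have h0 : (fun δ : ℝ => 7 * δ + C * (δ ^ 2) ^ (1 - θ)) 0 < ρ := by
      simp [Real.zero_rpow h1θ.ne', hρ]
    have hev := (hcont.tendsto 0).eventually (gt_mem_nhds h0)
    obtain ⟨ε, hε, hball⟩ := Metric.eventually_nhds_iff.1 hev
    refine ⟨min (ε/2) (min 1 η), by positivity, (min_le_right _ _).trans (min_le_left _ _),
      (min_le_right _ _).trans (min_le_right _ _), ?_⟩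
    apply hball
    have h2 : 0 < min (ε/2) (min 1 η) := by positivity
    rw [Real.dist_eq, sub_zero, abs_of_pos h2]
    exact (min_le_left _ _).trans_lt (by linarith)
  obtain ⟨δ, hδ0, hδ1, hδη, hδρ⟩ := hδex
  refine ⟨δ, hδ0, ?_⟩
  rintro a b ⟨haA, hbP, haP⟩ ⟨K, hK1, -, -, hK4⟩
  rw [zero_add] at hK4
  have hR : ∀ k, ‖a (k+1) - b (k+1)‖ ≤ ‖b k - a (k+1)‖ := fun k => by
    rw [(hbP (k+1)).2, norm_sub_rev, ← dist_eq_norm]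
    exact infDist_le_dist_of_mem (hbP k).1
  have hS : ∀ k, ‖b k - a (k+1)‖ ≤ ‖a k - b k‖ := fun k => by
    rw [(haP k).2, norm_sub_rev (a k), ← dist_eq_norm]
    exact infDist_le_dist_of_mem (haA k)
  have hmem : ∀ x, infDist x Astar < ρ → x ∈ U ∩ (V ∩ V') := fun x hx =>
    hthick ((mem_thickening_iff_infDist_lt hAstar).2 hx)
  have hblk : ∀ k, infDist (a (k+1)) Astar < ρ → infDist (b (k+1)) Astar < ρ →
      ‖a (k+1) - b (k+1)‖ < δ →
      m * (‖a (k+1) - b (k+1)‖ ^ 2) ^ θ ≤ ‖b k - b (k+1)‖ ∧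
      ‖a (k+1) - b (k+1)‖ ^ 2 + l * ‖b k - b (k+1)‖ ^ 2 ≤ ‖a k - b k‖ ^ 2 := by
    intro k ha hb hr
    have hS2 : ‖b k - a (k+1)‖ ^ 2 ≤ ‖a k - b k‖ ^ 2 := pow_le_pow_left₀ (norm_nonneg _) (hS k) 2
    rcases (norm_nonneg (a (k+1) - b (k+1))).eq_or_lt with h0 | h0
    · have hab : a (k+1) = b (k+1) := norm_sub_eq_zero_iff.1 h0.symm
      rw [← h0]
      refine ⟨by simp [Real.zero_rpow (show θ ≠ 0 by linarith)], ?_⟩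
      rw [← hab]
      nlinarith [sq_nonneg ‖b k - a (k+1)‖]
    · have hA := hang (b k) (hbP k).1 (a (k+1)) (haA _)
        ⟨1, zero_le_one, b k - a (k+1), by rw [add_sub_cancel]; exact haP k, by simp⟩
        (b (k+1)) (hbP _) (hmem _ ha).2.1 (hmem _ hb).1 h0
      have hH : ‖b k - a (k+1)‖ ≤ (1 + c) * ‖a (k+1) - b (k+1)‖ →
          cosAngle (b k - b (k+1)) (a (k+1) - b (k+1)) ≤
            Real.sqrt c * (‖a (k+1) - b (k+1)‖ - 0) ^ (ω/2) := by
        intro hle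
        by_contra! hlt
        exact hreg (b k) (hbP k).1 (a (k+1)) (haP k) (b (k+1)) (hbP _) (hmem _ ha).2.2 h0
          (by linarith) ⟨b k, (hbP k).1, hle, haP k, hlt⟩
      obtain ⟨c1, c2⟩ := s11_block (b k) (a (k+1)) (b (k+1)) γ c ω hγ hc1 h0 (hR k) hA hH
      refine ⟨?_, c2.trans hS2⟩
      apply le_of_sq_le_sq _ (norm_nonneg _)
      rw [mul_pow, hm, Real.sq_sqrt (by positivity)]
      have key : ((‖a (k+1) - b (k+1)‖ ^ 2) ^ θ) ^ 2 =
          ‖a (k+1) - b (k+1)‖ ^ 2 * ‖a (k+1) - b (k+1)‖ ^ ω := by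
        generalize ‖a (k+1) - b (k+1)‖ = r at h0
        have e : r ^ 2 = r ^ (2:ℝ) := by rw [Real.rpow_ofNat]
        rw [← Real.rpow_ofNat _ 2, e, ← Real.rpow_mul h0.le, ← Real.rpow_mul h0.le,
          ← Real.rpow_add h0, hω]
        congr 1
        ring
      rw [key]
      exact c1
  obtain ⟨q1, q2, q3, q4⟩ := s11_core (fun k => a (k+K)) (fun k => b (k+K)) Astar ρ δ l m θ C
    hl0 hm0 hθ1 hθ2 hC
    (fun k => by have := hR (k+K); rwa [show k+K+1 = k+1+K by ring] at this)
    (fun k => by have := hS (k+K); rwa [show k+K+1 = k+1+K by ring] at this)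
    (fun k => by have := hblk (k+K); rwa [show k+K+1 = k+1+K by ring] at this)
    (by rw [hEq]; simpa using hK1) (by simpa using hK4) hδρ
  obtain ⟨x, hxa, hxb, r1, r2⟩ := s11_rate (fun k => a (k+K)) (fun k => b (k+K)) l m θ C
    hl0 hm0 hθ1 hθ2 hC0 (fun k => (q1 k).le.trans hδ1) q2 q3 q4
  have hxa' : Tendsto a atTop (𝓝 x) := (tendsto_add_atTop_iff_nat K).1 hxa
  have hxb' : Tendsto b atTop (𝓝 x) := (tendsto_add_atTop_iff_nat K).1 hxb
  refine ⟨x, hAcl.mem_of_tendsto hxa' (Eventually.of_forall haA),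
    hBcl.mem_of_tendsto hxb' (Eventually.of_forall fun k => (hbP k).1), hxa', hxb', fun h => ?_,
    fun h => ?_⟩
  · obtain ⟨M, hM⟩ := r1 h
    set p := (1 - θ)/(2*θ - 1) with hp
    have hp0 : 0 < p := div_pos h1θ (by linarith)
    have hM0 : 0 ≤ M := by
      have := (norm_nonneg _).trans (hM 0).1
      simpa using this
    have hcomp : ∀ k : ℕ, K ≤ k → 1 ≤ k →
        M * (((k - K : ℕ) : ℝ) + 1) ^ (-p) ≤ (M * ((K:ℝ) + 1) ^ p) * (k:ℝ) ^ (-p) := by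
      intro k hk hk1
      obtain ⟨i, rfl⟩ := Nat.exists_eq_add_of_le hk
      rw [Nat.add_sub_cancel_left, mul_assoc]
      apply mul_le_mul_of_nonneg_left _ hM0
      have hkpos : (0:ℝ) < ((K + i : ℕ) : ℝ) := by exact_mod_cast hk1
      have hle : ((K + i : ℕ) : ℝ) ≤ ((K:ℝ) + 1) * ((i:ℝ) + 1) := by
        push_cast
        nlinarith [(Nat.cast_nonneg K : (0:ℝ) ≤ K), (Nat.cast_nonneg i : (0:ℝ) ≤ i),
          mul_nonneg (Nat.cast_nonneg K : (0:ℝ) ≤ K) (Nat.cast_nonneg i : (0:ℝ) ≤ i)]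
      have h3 := Real.rpow_le_rpow_of_nonpos hkpos hle (show -p ≤ 0 by linarith)
      rw [Real.mul_rpow (by positivity) (by positivity)] at h3
      calc ((i:ℝ) + 1) ^ (-p) = ((K:ℝ)+1)^p * (((K:ℝ)+1)^(-p) * ((i:ℝ) + 1) ^ (-p)) := by
            rw [← mul_assoc, ← Real.rpow_add (by positivity)]; simp
        _ ≤ _ := by gcongr
    have hf : ∀ k : ℕ, 1 ≤ k → 0 < (k:ℝ) ^ (-p) := fun k hk => by
      have : (0:ℝ) < k := by exact_mod_cast hk
      positivity
    obtain ⟨C1, hC1, h1⟩ := s11_bigO (fun k => ‖b k - x‖) (fun k => (k:ℝ)^(-p)) K 1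
      (M * ((K:ℝ) + 1) ^ p) hf (fun k hk hk1 => by
        have := (hM (k-K)).1
        simp only [Nat.sub_add_cancel hk] at this
        exact this.trans (hcomp k hk hk1))
    obtain ⟨C2, hC2, h2⟩ := s11_bigO (fun k => ‖a k - x‖) (fun k => (k:ℝ)^(-p)) K 1
      (M * ((K:ℝ) + 1) ^ p) hf (fun k hk hk1 => by
        have := (hM (k-K)).2
        simp only [Nat.sub_add_cancel hk] at this
        exact this.trans (hcomp k hk hk1))
    refine ⟨max C1 C2, fun k hk => ⟨(h1 k hk).trans ?_, (h2 k hk).trans ?_⟩⟩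
    · exact mul_le_mul_of_nonneg_right (le_max_left _ _) (hf k hk).le
    · exact mul_le_mul_of_nonneg_right (le_max_right _ _) (hf k hk).le
  · obtain ⟨M, q, hq0, hq1, hM⟩ := r2 h
    have hf : ∀ k : ℕ, 0 ≤ k → 0 < q ^ k := fun k _ => by positivity
    have hcomp : ∀ k : ℕ, K ≤ k → M * q ^ (k - K) = (M / q ^ K) * q ^ k := by
      intro k hk
      obtain ⟨i, rfl⟩ := Nat.exists_eq_add_of_le hk
      rw [Nat.add_sub_cancel_left, pow_add]
      field_simp
    obtain ⟨C1, hC1, h1⟩ := s11_bigO (fun k => ‖b k - x‖) (fun k => q ^ k) K 0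
      (M / q ^ K) hf (fun k hk hk1 => by
        have := (hM (k-K)).1
        simp only [Nat.sub_add_cancel hk] at this
        exact this.trans (hcomp k hk).le)
    obtain ⟨C2, hC2, h2⟩ := s11_bigO (fun k => ‖a k - x‖) (fun k => q ^ k) K 0
      (M / q ^ K) hf (fun k hk hk1 => by
        have := (hM (k-K)).2
        simp only [Nat.sub_add_cancel hk] at this
        exact this.trans (hcomp k hk).le)
    refine ⟨max C1 C2, hC1.trans (le_max_left _ _), q, hq0, hq1, fun k =>
      ⟨(h1 k (Nat.zero_le k)).trans ?_, (h2 k (Nat.zero_le k)).trans ?_⟩⟩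
    · exact mul_le_mul_of_nonneg_right (le_max_left _ _) (hf k (Nat.zero_le k)).le
    · exact mul_le_mul_of_nonneg_right (le_max_right _ _) (hf k (Nat.zero_le k)).le
end
end

section
/- (Failure of the Douglas–Rachford method for cylinder and double spiral.) In ℝ³, let B = {x : x₁² + x₂² = 1, 0 ≤ x₃ ≤ 1} (the cylinder mantle), F = {(cos t, sin t, 0) : t ≥ 0}, a_±(t) = ((1 ± e^{−t})·cos t, (1 ± e^{−t})·sin t, e^{−t/2}), b(t) = (cos t, sin t, e^{−t/2}), and A = {a₊(t) : t ≥ 0} ∪ {a₋(t) : t ≥ 0} ∪ F (the double spiral). Consider the Douglas–Rachford iteration x_{n+1} ∈ ½(R_A R_B + I)(x_n), where R_S(x) = {2p − x : p ∈ P_S(x)}, started at x₁ = a₋(t₁) for some t₁ > 0. Then there is a strictly increasing sequence t₁ < t₂ < ⋯ with t_k → ∞ and t_k − t_{k−1} → 0 such that x_{2k−1} = a₋(t_k) and x_{2k} = b(t_k) for all k; consequently x_n − x_{n+1} → 0, the sequence (x_n) does not converge, and its set of accumulation points equals F. -/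
open Set Metric Filter Topology Real

noncomputable section

/-- The (multivalued) reflection `R_S(x) = {2p - x : p ∈ P_S(x)}`. -/
def reflSet {E : Type*} [NormedAddCommGroup E] [Module ℝ E] (S : Set E) (x : E) : Set E :=
  {z | ∃ p ∈ projSet S x, z = (2:ℝ) • p - x}

/-- A point of ℝ³. -/
def pt3 (a b c : ℝ) : EuclideanSpace ℝ (Fin 3) :=
  (WithLp.equiv 2 (Fin 3 → ℝ)).symm ![a, b, c]

/-- The cylinder mantle `B = {x : x₁² + x₂² = 1, 0 ≤ x₃ ≤ 1}`. -/
def cylinder : Set (EuclideanSpace ℝ (Fin 3)) :=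
  {x | (x 0)^2 + (x 1)^2 = 1 ∧ 0 ≤ x 2 ∧ x 2 ≤ 1}

/-- The base circle `F = {(cos t, sin t, 0) : t ≥ 0}`. -/
def baseCircle : Set (EuclideanSpace ℝ (Fin 3)) :=
  {x | ∃ t : ℝ, 0 ≤ t ∧ x = pt3 (cos t) (sin t) 0}

/-- The outer spiral `a₊` (sign `+1`) and inner spiral `a₋` (sign `-1`). -/
def spiralPt (s t : ℝ) : EuclideanSpace ℝ (Fin 3) :=
  pt3 ((1 + s * exp (-t)) * cos t) ((1 + s * exp (-t)) * sin t) (exp (-t/2))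

/-- The curve `b(t)` on the cylinder mantle. -/
def mantleCurve (t : ℝ) : EuclideanSpace ℝ (Fin 3) :=
  pt3 (cos t) (sin t) (exp (-t/2))

/-- The double spiral `A = A₊ ∪ A₋ ∪ F`. -/
def doubleSpiral : Set (EuclideanSpace ℝ (Fin 3)) :=
  {x | ∃ t : ℝ, 0 ≤ t ∧ x = spiralPt 1 t} ∪
  {x | ∃ t : ℝ, 0 ≤ t ∧ x = spiralPt (-1) t} ∪ baseCircle

/-- The set of accumulation points of a sequence. -/
def accPts (u : ℕ → EuclideanSpace ℝ (Fin 3)) : Set (EuclideanSpace ℝ (Fin 3)) :=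
  {x | ∃ φ : ℕ → ℕ, StrictMono φ ∧ Tendsto (u ∘ φ) atTop (𝓝 x)}

@[simp] lemma pt3_zero (a b c : ℝ) : pt3 a b c 0 = a := rfl
@[simp] lemma pt3_one (a b c : ℝ) : pt3 a b c 1 = b := rfl
@[simp] lemma pt3_two (a b c : ℝ) : pt3 a b c 2 = c := rfl

lemma pt3_eta (p : EuclideanSpace ℝ (Fin 3)) : p = pt3 (p 0) (p 1) (p 2) := by
  ext i
  fin_cases i <;> rfl

lemma pt3_smul (r a b c : ℝ) : r • pt3 a b c = pt3 (r * a) (r * b) (r * c) := by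
  ext i
  fin_cases i <;> rfl

lemma pt3_add (a b c a' b' c' : ℝ) :
    pt3 a b c + pt3 a' b' c' = pt3 (a + a') (b + b') (c + c') := by
  ext i
  fin_cases i <;> rfl

lemma pt3_sub (a b c a' b' c' : ℝ) :
    pt3 a b c - pt3 a' b' c' = pt3 (a - a') (b - b') (c - c') := by
  ext i
  fin_cases i <;> rfl

lemma normsq_pt3 (a b c : ℝ) : ‖pt3 a b c‖ ^ 2 = a ^ 2 + b ^ 2 + c ^ 2 := by
  rw [EuclideanSpace.norm_sq_eq, Fin.sum_univ_three]
  simp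

lemma continuous_pt3 {X : Type*} [TopologicalSpace X] {f g h : X → ℝ} (hf : Continuous f)
    (hg : Continuous g) (hh : Continuous h) : Continuous fun x => pt3 (f x) (g x) (h x) := by
  unfold pt3
  refine (PiLp.continuous_toLp 2 _).comp ?_
  refine continuous_pi fun i => ?_
  fin_cases i <;> simpa

lemma proj_le {E : Type*} [NormedAddCommGroup E] {S : Set E} {x p q : E}
    (hp : p ∈ projSet S x) (hq : q ∈ S) : ‖x - p‖ ≤ ‖x - q‖ := by
  rw [hp.2, ← dist_eq_norm]
  exact infDist_le_dist_of_mem hq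

lemma proj_le_sq {E : Type*} [NormedAddCommGroup E] {S : Set E} {x p q : E}
    (hp : p ∈ projSet S x) (hq : q ∈ S) : ‖x - p‖ ^ 2 ≤ ‖x - q‖ ^ 2 :=
  pow_le_pow_left₀ (norm_nonneg _) (proj_le hp hq) 2

lemma proj_self {E : Type*} [NormedAddCommGroup E] {S : Set E} {x p : E}
    (hp : p ∈ projSet S x) (hx : x ∈ S) : p = x := by
  have := proj_le hp hx
  rw [sub_self, norm_zero] at this
  exact (sub_eq_zero.mp (norm_le_zero_iff.mp this)).symm

lemma exp_half_sq (t : ℝ) : exp (-t / 2) ^ 2 = exp (-t) := by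
  rw [← exp_nat_mul]; congr 1; push_cast; ring

lemma mantle_mem {t : ℝ} (ht : 0 ≤ t) : mantleCurve t ∈ cylinder := by
  refine ⟨?_, ?_, ?_⟩
  · simp [mantleCurve]
  · simpa [mantleCurve] using (exp_pos _).le
  · simp only [mantleCurve, pt3_two]
    exact exp_le_one_iff.mpr (by linarith)

/-- squared distance from `b(t)` to `a_σ(s)`. -/
def dsq (σ t s : ℝ) : ℝ :=
  exp (-s) ^ 2 + 2 * (1 + σ * exp (-s)) * (1 - cos (s - t)) + (exp (-t / 2) - exp (-s / 2)) ^ 2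

lemma normsq_mantle_spiral {σ : ℝ} (hσ : σ ^ 2 = 1) (t s : ℝ) :
    ‖mantleCurve t - spiralPt σ s‖ ^ 2 = dsq σ t s := by
  unfold mantleCurve spiralPt dsq
  rw [pt3_sub, normsq_pt3, cos_sub]
  have h1 := sin_sq_add_cos_sq t
  have h2 := sin_sq_add_cos_sq s
  linear_combination h1 + (1 + σ * exp (-s)) ^ 2 * h2 + exp (-s) ^ 2 * hσ

lemma dsq_self (σ t : ℝ) : dsq σ t t = exp (-t) ^ 2 := by
  simp [dsq]

lemma cyl_proj {t : ℝ} (ht : 0 < t) {p : EuclideanSpace ℝ (Fin 3)}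
    (hp : p ∈ projSet cylinder (spiralPt (-1) t)) : p = mantleCurve t := by
  have h := proj_le_sq hp (mantle_mem ht.le)
  have hr : exp (-t) < 1 := Real.exp_lt_one_iff.mpr (by linarith)
  have h2 := normsq_mantle_spiral (σ := -1) (by norm_num) t t
  rw [dsq_self, norm_sub_rev] at h2
  rw [h2, pt3_eta p] at h
  have hc := hp.1.1
  unfold spiralPt at h
  rw [pt3_sub, normsq_pt3] at h
  have h1 := sin_sq_add_cos_sq t
  set E := exp (-t)
  set a := p 0
  set b := p 1
  have key : (1 - E) * ((a - cos t) ^ 2 + (b - sin t) ^ 2) + (exp (-t / 2) - p 2) ^ 2 ≤ 0 := by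
    have : (1 - E) * ((a - cos t) ^ 2 + (b - sin t) ^ 2) + (exp (-t / 2) - p 2) ^ 2 =
      ((1 + -1 * E) * cos t - a) ^ 2 + ((1 + -1 * E) * sin t - b) ^ 2 + (exp (-t / 2) - p 2) ^ 2
        - E ^ 2 := by
      linear_combination (1 - E) * hc + (1 - E) * h1 - hc - (1 - E) ^ 2 * h1
    linarith
  have hE : 0 < 1 - E := by linarith
  have k3 : (exp (-t / 2) - p 2) ^ 2 = 0 := by
    have := mul_nonneg hE.le (add_nonneg (sq_nonneg (a - cos t)) (sq_nonneg (b - sin t)))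
    nlinarith [sq_nonneg (exp (-t / 2) - p 2)]
  have k4 : (a - cos t) ^ 2 + (b - sin t) ^ 2 ≤ 0 := by
    rw [k3, add_zero] at key
    exact nonpos_of_mul_nonpos_right key hE
  have k1 : a = cos t := by
    have : (a - cos t) ^ 2 = 0 := by nlinarith [sq_nonneg (a - cos t), sq_nonneg (b - sin t)]
    linarith [pow_eq_zero_iff (two_ne_zero) |>.mp this]
  have k2 : b = sin t := by
    have : (b - sin t) ^ 2 = 0 := by nlinarith [sq_nonneg (a - cos t), sq_nonneg (b - sin t)]
    linarith [pow_eq_zero_iff (two_ne_zero) |>.mp this]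
  have k3' := pow_eq_zero_iff (two_ne_zero) |>.mp k3
  rw [pt3_eta p]
  unfold mantleCurve
  congr 1
  linarith

lemma step_odd {t : ℝ} (ht : 0 < t) {x y : EuclideanSpace ℝ (Fin 3)} (hx : x = spiralPt (-1) t)
    (h : ∃ w ∈ reflSet cylinder x, ∃ z ∈ reflSet doubleSpiral w, y = (1/2 : ℝ) • (x + z)) :
    y = mantleCurve t := by
  obtain ⟨w, ⟨p, hp, rfl⟩, z, ⟨q, hq, rfl⟩, rfl⟩ := h
  subst hx
  have := cyl_proj ht hp
  subst this
  have hw : (2:ℝ) • mantleCurve t - spiralPt (-1) t = spiralPt 1 t := by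
    unfold mantleCurve spiralPt
    rw [pt3_smul, pt3_sub]
    congr 1 <;> ring
  rw [hw] at hq ⊢
  have hm : spiralPt 1 t ∈ doubleSpiral := Or.inl (Or.inl ⟨t, ht.le, rfl⟩)
  rw [proj_self hq hm]
  unfold mantleCurve spiralPt
  rw [pt3_smul, pt3_sub, pt3_add, pt3_smul]
  congr 1 <;> ring

lemma hasDerivAt_dsq (t s : ℝ) (hc : cos (s - t) = 1) :
    HasDerivAt (fun s => dsq (-1) t s)
      (-2 * exp (-s) ^ 2 + (exp (-t / 2) - exp (-s / 2)) * exp (-s / 2)) s := by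
  have hs : sin (s - t) = 0 := by
    have := sin_sq_add_cos_sq (s - t)
    rw [hc] at this
    exact pow_eq_zero_iff (two_ne_zero) |>.mp (by linarith)
  have e1 : HasDerivAt (fun s : ℝ => exp (-s)) (exp (-s) * (-1)) s := ((hasDerivAt_id s).neg).exp
  have e2 : HasDerivAt (fun s : ℝ => exp (-s / 2)) (exp (-s / 2) * (-1 / 2)) s :=
    (((hasDerivAt_id s).neg).div_const 2).exp
  have e3 : HasDerivAt (fun s : ℝ => cos (s - t)) (-sin (s - t) * 1) s :=
    ((hasDerivAt_id s).sub_const t).cos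
  have := ((e1.pow 2).add ((((e1.const_mul (-1)).const_add 1).const_mul 2).mul
    (e3.const_sub 1))).add ((e2.const_sub (exp (-t / 2))).pow 2)
  refine (this.congr_deriv ?_)
  rw [hc, hs]
  ring

lemma min_cos_ne {t s : ℝ} (ht : 0 < t) (hts : t ≤ s)
    (hmin : ∀ s', 0 ≤ s' → dsq (-1) t s ≤ dsq (-1) t s') : cos (s - t) ≠ 1 := by
  intro hc
  have hl : IsLocalMin (fun s => dsq (-1) t s) s := by
    filter_upwards [lt_mem_nhds (ht.trans_le hts)] with s' hs'
    exact hmin s' hs'.le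
  have h0 := hl.hasDerivAt_eq_zero (hasDerivAt_dsq t s hc)
  rw [← exp_half_sq s] at h0
  have hv := exp_pos (-s / 2)
  have hv1 : exp (-s / 2) ≤ 1 := exp_le_one_iff.mpr (by linarith)
  rcases hts.eq_or_lt with rfl | hlt
  · have : 0 < exp (-t / 2) ^ 4 := by positivity
    nlinarith
  · obtain ⟨n, hn⟩ := (cos_eq_one_iff _).mp hc
    have hpi := pi_gt_three
    have hn1 : (1 : ℝ) ≤ n := by
      have : (0 : ℝ) < n := by
        by_contra hneg
        push Not at hneg
        nlinarith
      have : (0 : ℤ) < n := by exact_mod_cast this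
      exact_mod_cast this
    have hge : 6 ≤ s - t := by nlinarith
    have : exp (-t / 2) = exp (-s / 2) * exp ((s - t) / 2) := by
      rw [← exp_add]; congr 1; ring
    have h4 : 4 ≤ exp ((s - t) / 2) := by
      have := add_one_le_exp ((s - t) / 2)
      linarith
    rw [this] at h0
    have h5 : exp (-s / 2) ^ 2 * (-2 * exp (-s / 2) ^ 2 + exp ((s - t) / 2) - 1) = 0 := by
      linear_combination h0
    have h6 : 0 < exp (-s / 2) ^ 2 * (-2 * exp (-s / 2) ^ 2 + exp ((s - t) / 2) - 1) := by
      apply mul_pos (by positivity)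
      nlinarith
    linarith

lemma min_gt {t s : ℝ} (ht : 0 < t) (hs : 0 ≤ s)
    (hmin : ∀ s', 0 ≤ s' → dsq (-1) t s ≤ dsq (-1) t s') : t < s := by
  by_contra hle
  push Not at hle
  have h := hmin t ht.le
  rw [dsq_self] at h
  have hes : exp (-s) ≤ 1 := exp_le_one_iff.mpr (by linarith)
  have h1 : exp (-t) ≤ exp (-s) := exp_le_exp.mpr (by linarith)
  have h2 := mul_nonneg (sub_nonneg.mpr hes) (sub_nonneg.mpr (cos_le_one (s - t)))
  have h3 := sq_nonneg (exp (-t / 2) - exp (-s / 2))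
  have hp := exp_pos (-t)
  unfold dsq at h
  have heq : exp (-s) ≤ exp (-t) := by nlinarith
  have : s = t := by
    have := exp_le_exp.mp heq
    linarith
  subst this
  exact min_cos_ne ht le_rfl hmin (by simp)

lemma step_even {t : ℝ} (ht : 0 < t) {x y : EuclideanSpace ℝ (Fin 3)} (hx : x = mantleCurve t)
    (h : ∃ w ∈ reflSet cylinder x, ∃ z ∈ reflSet doubleSpiral w, y = (1/2 : ℝ) • (x + z)) :
    ∃ s, t < s ∧ y = spiralPt (-1) s ∧ ∀ s', 0 ≤ s' → dsq (-1) t s ≤ dsq (-1) t s' := by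
  obtain ⟨w, ⟨p, hp, rfl⟩, z, ⟨q, hq, rfl⟩, rfl⟩ := h
  subst hx
  have := proj_self hp (mantle_mem ht.le)
  subst this
  have hw : (2:ℝ) • mantleCurve t - mantleCurve t = mantleCurve t := by
    rw [two_smul, add_sub_cancel_right]
  rw [hw] at hq ⊢
  have hy : (1/2 : ℝ) • (mantleCurve t + ((2:ℝ) • q - mantleCurve t)) = q := by
    rw [add_sub_cancel, smul_smul]; norm_num
  rw [hy]
  have hm : ∀ s', 0 ≤ s' → ‖mantleCurve t - q‖ ^ 2 ≤ dsq (-1) t s' := fun s' hs' => by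
    rw [← normsq_mantle_spiral (by norm_num)]
    exact proj_le_sq hq (Or.inl (Or.inr ⟨s', hs', rfl⟩))
  rcases hq.1 with (⟨s, hs, rfl⟩ | ⟨s, hs, rfl⟩) | ⟨s, hs, rfl⟩
  · exfalso
    rw [normsq_mantle_spiral (by norm_num)] at hm
    have hle : dsq (-1) t s ≤ dsq 1 t s := by
      unfold dsq
      have := mul_nonneg (exp_pos (-s)).le (sub_nonneg.mpr (cos_le_one (s - t)))
      linarith
    have hmin : ∀ s', 0 ≤ s' → dsq (-1) t s ≤ dsq (-1) t s' := fun s' hs' => hle.trans (hm s' hs')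
    have hc := min_cos_ne ht (min_gt ht hs hmin).le hmin
    have hlt := lt_of_le_of_ne (cos_le_one (s - t)) hc
    have := mul_pos (exp_pos (-s)) (sub_pos.mpr hlt)
    have := hm s hs
    unfold dsq at this
    linarith
  · rw [normsq_mantle_spiral (by norm_num)] at hm
    exact ⟨s, min_gt ht hs hm, rfl, hm⟩
  · exfalso
    have h := hm t ht.le
    rw [dsq_self, ← exp_half_sq] at h
    unfold mantleCurve at h
    rw [pt3_sub, normsq_pt3] at h
    have h1 : exp (-t / 2) < 1 := Real.exp_lt_one_iff.mpr (by linarith)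
    have h0 := exp_pos (-t / 2)
    have h2 : exp (-t / 2) ^ 2 < 1 := by nlinarith
    have h3 : 0 < exp (-t / 2) ^ 2 := by positivity
    nlinarith [sq_nonneg (cos t - cos s), sq_nonneg (sin t - sin s)]

lemma spiral_inj {s t : ℝ} (h : spiralPt (-1) s = spiralPt (-1) t) : s = t := by
  have : spiralPt (-1) s 2 = spiralPt (-1) t 2 := by rw [h]
  simp only [spiralPt, pt3_two, exp_eq_exp] at this
  linarith

lemma baseCircle_eq : baseCircle = {x | x 0 ^ 2 + x 1 ^ 2 = 1 ∧ x 2 = 0} := by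
  ext x
  constructor
  · rintro ⟨t, -, rfl⟩
    simp
  · rintro ⟨h1, h2⟩
    let z : ℂ := ⟨x 0, x 1⟩
    have hz : ‖z‖ = 1 := by
      rw [← sq_eq_sq₀ (norm_nonneg _) zero_le_one, Complex.sq_norm, Complex.normSq_apply]
      simp only [z]; linarith
    have hz0 : z ≠ 0 := by
      intro h; rw [h] at hz; simp at hz
    have hc := Complex.cos_arg hz0
    have hs := Complex.sin_arg z
    rw [hz, div_one] at hc hs
    refine ⟨z.arg + 2 * π, by linarith [Complex.neg_pi_lt_arg z, pi_pos], ?_⟩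
    rw [cos_add_two_pi, sin_add_two_pi, hc, hs, ← h2]
    exact pt3_eta x

/-- The analytic conclusion for the recursion. -/
lemma seq_tendsto {T : ℕ → ℝ} (h0 : 0 < T 0) (hmono : StrictMono T)
    (hmin : ∀ k s', 0 ≤ s' → dsq (-1) (T k) (T (k + 1)) ≤ dsq (-1) (T k) s') :
    Tendsto T atTop atTop := by
  rcases tendsto_atTop_of_monotone hmono.monotone with h | ⟨l, hl⟩
  · exact h
  · exfalso
    have hl0 : 0 < l := h0.trans_le (hmono.monotone.ge_of_tendsto hl 0)
    have hl1 : Tendsto (fun k => T (k + 1)) atTop (𝓝 l) := hl.comp (tendsto_add_atTop_nat 1)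
    have hcont : Continuous fun p : ℝ × ℝ => dsq (-1) p.1 p.2 := by
      unfold dsq; fun_prop
    refine min_cos_ne hl0 le_rfl (fun s' hs' => ?_) (by simp : cos (l - l) = 1)
    have a1 : Tendsto (fun k => dsq (-1) (T k) (T (k + 1))) atTop (𝓝 (dsq (-1) l l)) :=
      Tendsto.comp (g := fun p : ℝ × ℝ => dsq (-1) p.1 p.2) (f := fun k => (T k, T (k + 1)))
        (hcont.tendsto (l, l)) (hl.prodMk_nhds hl1)
    have a2 : Tendsto (fun k => dsq (-1) (T k) s') atTop (𝓝 (dsq (-1) l s')) :=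
      Tendsto.comp (g := fun p : ℝ × ℝ => dsq (-1) p.1 p.2) (f := fun k => (T k, s'))
        (hcont.tendsto (l, s')) (hl.prodMk_nhds tendsto_const_nhds)
    exact le_of_tendsto_of_tendsto' a1 a2 fun k => hmin k s' hs'

lemma gap_bound {t s : ℝ} (ht : 0 < t) (hts : t < s) (h : dsq (-1) t s ≤ exp (-t) ^ 2) :
    s - t ≤ -2 * log (1 - exp (-t / 2)) := by
  have hes : exp (-s) ≤ 1 := exp_le_one_iff.mpr (by linarith)
  have h2 := mul_nonneg (sub_nonneg.mpr hes) (sub_nonneg.mpr (cos_le_one (s - t)))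
  have h3 : (exp (-t / 2) - exp (-s / 2)) ^ 2 ≤ exp (-t) ^ 2 := by
    unfold dsq at h
    nlinarith [sq_nonneg (exp (-s))]
  have h4 := abs_le_of_sq_le_sq h3 (exp_pos _).le
  have h5 := (abs_le.mp h4).2
  rw [← exp_half_sq t] at h5
  have : exp (-s / 2) = exp (-t / 2) * exp (-(s - t) / 2) := by
    rw [← exp_add]; congr 1; ring
  rw [this] at h5
  have hu := exp_pos (-t / 2)
  have h6 : 1 - exp (-t / 2) ≤ exp (-(s - t) / 2) := by
    by_contra hcon
    push Not at hcon
    nlinarith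
  have hu1 : exp (-t / 2) < 1 := Real.exp_lt_one_iff.mpr (by linarith)
  have := log_le_log (by linarith) h6
  rw [log_exp] at this
  linarith

lemma seq_gap {T : ℕ → ℝ} (h0 : 0 < T 0) (hmono : StrictMono T)
    (hmin : ∀ k s', 0 ≤ s' → dsq (-1) (T k) (T (k + 1)) ≤ dsq (-1) (T k) s') :
    Tendsto (fun k => T (k + 1) - T k) atTop (𝓝 0) := by
  have hT := seq_tendsto h0 hmono hmin
  have hpos : ∀ k, 0 < T k := fun k => h0.trans_le (hmono.monotone (Nat.zero_le k))
  have e : Tendsto (fun k => exp (-T k / 2)) atTop (𝓝 0) := by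
    refine tendsto_exp_atBot.comp ?_
    exact (tendsto_neg_atTop_atBot.comp hT).atBot_div_const two_pos
  have e2 : Tendsto (fun k => -2 * log (1 - exp (-T k / 2))) atTop (𝓝 0) := by
    have := ((tendsto_const_nhds (x := (1:ℝ))).sub e).log (by norm_num)
    simpa using this.const_mul (-2)
  refine squeeze_zero (fun k => (sub_pos.mpr (hmono (Nat.lt_succ_self k))).le) (fun k => ?_) e2
  refine gap_bound (hpos k) (hmono (Nat.lt_succ_self k)) ?_
  have := hmin k (T k) (hpos k).le
  rwa [dsq_self] at this

lemma hit {T : ℕ → ℝ} (hT : Tendsto T atTop atTop)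
    (hgap : Tendsto (fun k => T (k + 1) - T k) atTop (𝓝 0)) (θ : ℝ) (N : ℕ) :
    ∃ m, N ≤ m ∧ ∃ j : ℕ, |T m - θ - j * (2 * π)| < 1 / ((N : ℝ) + 1) := by
  have hε : (0 : ℝ) < 1 / ((N : ℝ) + 1) := by positivity
  obtain ⟨K₀, hK₀⟩ := eventually_atTop.mp (hgap.eventually (gt_mem_nhds hε))
  set K := max K₀ N
  obtain ⟨j, hj⟩ := exists_nat_gt (T K - θ)
  have hj' : T K < θ + j * (2 * π) := by
    have : (j : ℝ) ≤ j * (2 * π) := by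
      have : (0:ℝ) ≤ j := Nat.cast_nonneg j
      nlinarith [pi_gt_three]
    linarith
  have hex : ∃ i, θ + j * (2 * π) ≤ T (K + i) := by
    obtain ⟨M, hM⟩ := eventually_atTop.mp (hT.eventually_ge_atTop (θ + j * (2 * π)))
    exact ⟨M, hM _ (by omega)⟩
  classical
  obtain ⟨i, hi, hlt⟩ : ∃ i, θ + j * (2 * π) ≤ T (K + i) ∧ ∀ i' < i, ¬ θ + j * (2 * π) ≤ T (K + i') :=
    ⟨Nat.find hex, Nat.find_spec hex, fun i' h => Nat.find_min hex h⟩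
  cases i with
  | zero => simp only [add_zero] at hi; linarith
  | succ i =>
    have h1 := hlt i (Nat.lt_succ_self i)
    push Not at h1
    have h2 := hK₀ (K + i) (by omega)
    refine ⟨K + (i + 1), by omega, j, ?_⟩
    rw [← add_assoc] at hi ⊢
    rw [abs_of_nonneg (by linarith)]
    linarith

/-- failure of the Douglas–Rachford method for the cylinder mantle and the
double spiral: the DR iterates started at `a₋(t₁)` follow `x_{2k-1} = a₋(t_k)`,
`x_{2k} = b(t_k)` for a strictly increasing sequence `t_k → ∞` with `t_k - t_{k-1} → 0`;
consequently `x_n - x_{n+1} → 0`, the sequence does not converge, and its accumulation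
points fill the base circle. -/
theorem statement17 (x : ℕ → EuclideanSpace ℝ (Fin 3)) (t₁ : ℝ) (ht₁ : 0 < t₁)
    (hstart : x 1 = spiralPt (-1) t₁)
    (hstep : ∀ n, 1 ≤ n → ∃ w ∈ reflSet cylinder (x n), ∃ z ∈ reflSet doubleSpiral w,
      x (n+1) = (1/2 : ℝ) • (x n + z)) :
    (∃ t : ℕ → ℝ, StrictMono t ∧ t 1 = t₁ ∧
      Tendsto t atTop atTop ∧
      Tendsto (fun k => t (k+1) - t k) atTop (𝓝 0) ∧
      ∀ k, 1 ≤ k → x (2*k - 1) = spiralPt (-1) (t k) ∧ x (2*k) = mantleCurve (t k)) ∧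
    Tendsto (fun n => x n - x (n+1)) atTop (𝓝 0) ∧
    (¬ ∃ l, Tendsto x atTop (𝓝 l)) ∧
    accPts x = baseCircle := by
  have hstepQ : ∀ k t, 0 < t → x (2 * k + 1) = spiralPt (-1) t →
      x (2 * k + 2) = mantleCurve t ∧ ∃ s, t < s ∧ x (2 * (k + 1) + 1) = spiralPt (-1) s ∧
        ∀ s', 0 ≤ s' → dsq (-1) t s ≤ dsq (-1) t s' := by
    intro k t ht hx
    have h1 := step_odd ht hx (hstep (2 * k + 1) (by omega))
    exact ⟨h1, step_even ht h1 (hstep (2 * k + 2) (by omega))⟩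
  have hQ : ∀ k, ∃ t, 0 < t ∧ x (2 * k + 1) = spiralPt (-1) t := by
    intro k
    induction k with
    | zero => exact ⟨t₁, ht₁, hstart⟩
    | succ k ih =>
      obtain ⟨t, ht, hx⟩ := ih
      obtain ⟨-, s, hs, hx', -⟩ := hstepQ k t ht hx
      exact ⟨s, ht.trans hs, hx'⟩
  choose T hTpos hTx using hQ
  have hT0 : T 0 = t₁ := spiral_inj ((hTx 0).symm.trans hstart)
  have hTb : ∀ k, x (2 * k + 2) = mantleCurve (T k) := fun k =>
    (hstepQ k _ (hTpos k) (hTx k)).1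
  have hTs : ∀ k, T k < T (k + 1) ∧
      ∀ s', 0 ≤ s' → dsq (-1) (T k) (T (k + 1)) ≤ dsq (-1) (T k) s' := by
    intro k
    obtain ⟨-, s, hs, hx', hm⟩ := hstepQ k _ (hTpos k) (hTx k)
    have : s = T (k + 1) := spiral_inj (hx'.symm.trans (hTx (k + 1)))
    subst this
    exact ⟨hs, hm⟩
  have hmono : StrictMono T := strictMono_nat_of_lt_succ fun k => (hTs k).1
  have hmin := fun k => (hTs k).2
  have hlim := seq_tendsto (hTpos 0) hmono hmin
  have hgap := seq_gap (hTpos 0) hmono hmin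
  -- the index of the spiral parameter belonging to `x n`
  have hidx : Tendsto (fun n : ℕ => (n - 1) / 2) atTop atTop := by
    refine tendsto_atTop.mpr fun b => ?_
    filter_upwards [eventually_ge_atTop (2 * b + 1)] with n hn
    omega
  have hTn := hlim.comp hidx
  have hexp : Tendsto (fun n : ℕ => exp (-T ((n - 1) / 2))) atTop (𝓝 0) :=
    tendsto_exp_atBot.comp (tendsto_neg_atTop_atBot.comp hTn)
  have hexp2 : Tendsto (fun n : ℕ => exp (-T ((n - 1) / 2) / 2)) atTop (𝓝 0) :=
    tendsto_exp_atBot.comp ((tendsto_neg_atTop_atBot.comp hTn).atBot_div_const two_pos)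
  have hdiff : Tendsto (fun n => x n - x (n+1)) atTop (𝓝 0) := by
    refine squeeze_zero_norm' ?_ hexp
    filter_upwards [eventually_ge_atTop 1] with n hn
    obtain ⟨k, rfl | rfl⟩ : ∃ k, n = 2 * k + 1 ∨ n = 2 * k + 2 := ⟨(n - 1) / 2, by omega⟩
    · have e : (2 * k + 1 - 1) / 2 = k := by omega
      rw [e, hTx k, show 2 * k + 1 + 1 = 2 * k + 2 by ring, hTb k, norm_sub_rev]
      refine (sq_le_sq₀ (norm_nonneg _) (exp_pos _).le).mp ?_
      rw [normsq_mantle_spiral (by norm_num), dsq_self]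
    · have e : (2 * k + 2 - 1) / 2 = k := by omega
      rw [e, hTb k, show 2 * k + 2 + 1 = 2 * (k + 1) + 1 by ring, hTx (k + 1)]
      refine (sq_le_sq₀ (norm_nonneg _) (exp_pos _).le).mp ?_
      rw [normsq_mantle_spiral (by norm_num), ← dsq_self (-1)]
      exact hmin k _ (hTpos k).le
  have hsub : accPts x ⊆ baseCircle := by
    rintro l ⟨φ, hφ, hl⟩
    rw [baseCircle_eq]
    have hc : ∀ i, Tendsto (fun n => x (φ n) i) atTop (𝓝 (l i)) := fun i =>
      ((EuclideanSpace.proj (𝕜 := ℝ) i).continuous.tendsto l).comp hl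
    have hφ' := hφ.tendsto_atTop
    have hform : ∀ n, 1 ≤ n → x n 2 = exp (-T ((n - 1) / 2) / 2) ∧
        |x n 0 ^ 2 + x n 1 ^ 2 - 1| ≤ 2 * exp (-T ((n - 1) / 2)) := by
      intro n hn
      obtain ⟨k, rfl | rfl⟩ : ∃ k, n = 2 * k + 1 ∨ n = 2 * k + 2 := ⟨(n - 1) / 2, by omega⟩
      · have e : (2 * k + 1 - 1) / 2 = k := by omega
        rw [e, hTx k]
        refine ⟨rfl, ?_⟩
        simp only [spiralPt, pt3_zero, pt3_one]
        have h1 := sin_sq_add_cos_sq (T k)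
        have hE := exp_pos (-T k)
        have hE1 : exp (-T k) < 1 := Real.exp_lt_one_iff.mpr (by linarith [hTpos k])
        have : ((1 + -1 * exp (-T k)) * cos (T k)) ^ 2 + ((1 + -1 * exp (-T k)) * sin (T k)) ^ 2 - 1
          = exp (-T k) ^ 2 - 2 * exp (-T k) := by
          linear_combination (1 - exp (-T k)) ^ 2 * h1
        rw [this, abs_le]
        constructor <;> nlinarith
      · have e : (2 * k + 2 - 1) / 2 = k := by omega
        rw [e, hTb k]
        refine ⟨rfl, ?_⟩
        simp only [mantleCurve, pt3_zero, pt3_one, cos_sq_add_sin_sq, sub_self, abs_zero]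
        positivity
    have hev : ∀ᶠ n in atTop, 1 ≤ φ n := hφ'.eventually_ge_atTop 1
    constructor
    · have h1 : Tendsto (fun n => x (φ n) 0 ^ 2 + x (φ n) 1 ^ 2 - 1) atTop (𝓝 0) := by
        refine squeeze_zero_norm' (a := fun n => 2 * exp (-T ((φ n - 1) / 2))) ?_ ?_
        · filter_upwards [hev] with n hn
          exact (hform _ hn).2
        · simpa using (hexp.comp hφ').const_mul 2
      have h2 := (((hc 0).pow 2).add ((hc 1).pow 2)).sub_const 1
      have := tendsto_nhds_unique h2 h1
      linarith
    · refine tendsto_nhds_unique (hc 2) ((hexp2.comp hφ').congr' ?_)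
      filter_upwards [hev] with n hn
      exact ((hform _ hn).1).symm
  have hsup : baseCircle ⊆ accPts x := by
    rintro l ⟨θ, -, rfl⟩
    choose m hm j hj using hit hlim hgap θ
    have hmt : Tendsto m atTop atTop := tendsto_atTop_mono hm tendsto_id
    have hd : Tendsto (fun N => T (m N) - θ - j N * (2 * π)) atTop (𝓝 0) :=
      squeeze_zero_norm (fun N => (hj N).le) tendsto_one_div_add_atTop_nhds_zero_nat
    have he : Tendsto (fun N => exp (-T (m N) / 2)) atTop (𝓝 0) :=
      tendsto_exp_atBot.comp
        ((tendsto_neg_atTop_atBot.comp (hlim.comp hmt)).atBot_div_const two_pos)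
    have hG : Continuous fun p : ℝ × ℝ => pt3 (cos (θ + p.1)) (sin (θ + p.1)) p.2 :=
      continuous_pt3 (by fun_prop) (by fun_prop) (by fun_prop)
    have hlim2 : Tendsto (fun N => x (2 * m N + 2)) atTop (𝓝 (pt3 (cos θ) (sin θ) 0)) := by
      have := (hG.tendsto (0, 0)).comp (hd.prodMk_nhds he)
      simp only [add_zero] at this
      refine this.congr fun N => ?_
      rw [hTb]
      simp only [Function.comp, mantleCurve]
      have e : θ + (T (m N) - θ - j N * (2 * π)) = T (m N) - j N * (2 * π) := by ring
      rw [e, cos_sub_nat_mul_two_pi, sin_sub_nat_mul_two_pi]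
    have hmt2 : Tendsto (fun N => 2 * m N + 2) atTop atTop :=
      tendsto_atTop_mono (fun N => by omega) hmt
    obtain ⟨ψ, hψ, hψ2⟩ := strictMono_subseq_of_tendsto_atTop hmt2
    exact ⟨_, hψ2, hlim2.comp hψ.tendsto_atTop⟩
  refine ⟨?_, hdiff, ?_, hsub.antisymm hsup⟩
  · refine ⟨fun k => Nat.casesOn k (t₁ - 1) T, ?_, hT0, ?_, ?_, ?_⟩
    · refine strictMono_nat_of_lt_succ fun k => ?_
      cases k with
      | zero =>
        show t₁ - 1 < T 0
        rw [hT0]; linarith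
      | succ k => exact (hTs k).1
    · exact (tendsto_add_atTop_iff_nat 1).mp hlim
    · exact (tendsto_add_atTop_iff_nat 1).mp hgap
    · intro k hk
      cases k with
      | zero => omega
      | succ k => exact ⟨hTx k, hTb k⟩
  · rintro ⟨l, hl⟩
    have huniq : ∀ p ∈ baseCircle, p = l := by
      intro p hp
      obtain ⟨φ, hφ, h⟩ := hsup hp
      exact tendsto_nhds_unique h (hl.comp hφ.tendsto_atTop)
    have h1 := huniq _ ⟨0, le_rfl, rfl⟩
    have h2 := huniq _ ⟨π, pi_pos.le, rfl⟩
    have h3 := congrArg (fun p : EuclideanSpace ℝ (Fin 3) => p 0) (h1.trans h2.symm)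
    simp at h3
    norm_num at h3
end
end
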